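/- Let V be an orthogonal vector space of dimension n over an algebraically closed field of characteristic 0 and λ a partition. Then dim (S_λ V)^{O(V)} = 1 if λ = 2μ for some partition μ, and 0 otherwise. Similarly for a symplectic space W of dimension 2n, dim (S_λ W)^{Sp(W)} = 1 if λ = 2μ' (the conjugate of a partition 2μ, i.e., λ has even columns), and 0 otherwise. -/

import Mathlib

open scoped Classical

noncomputable section

variable (K V : Type*) [Field K] [AddCommGroup V] [Module K V]

/-- The d-th tensor power of V. -/
abbrev tpow (d : ℕ) := PiTensorProduct K (fun _ : Fin d => V)

/-- The action of a permutation of the factors on the tensor power. -/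
def permAction (d : ℕ) (σ : Equiv.Perm (Fin d)) : tpow K V d →ₗ[K] tpow K V d :=
  (PiTensorProduct.reindex K (fun _ : Fin d => V) σ).toLinearMap

/-- The Young symmetrizer e_T = Σ_{σ ∈ R_T, τ ∈ C_T} sgn(τ) σ τ of a tableau T of shape
lam, acting on the tensor power. -/
def youngSymmetrizer {n : ℕ} (lam : Fin n → ℕ)
    (T : (Σ i : Fin n, Fin (lam i)) ≃ Fin (∑ i, lam i)) :
    tpow K V (∑ i, lam i) →ₗ[K] tpow K V (∑ i, lam i) :=
  ∑ σ ∈ Finset.univ.filter (fun σ : Equiv.Perm (Fin (∑ i, lam i)) =>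
      ∀ c : Σ i : Fin n, Fin (lam i), (T.symm (σ (T c))).1 = c.1),
    ∑ τ ∈ Finset.univ.filter (fun τ : Equiv.Perm (Fin (∑ i, lam i)) =>
      ∀ c : Σ i : Fin n, Fin (lam i), ((T.symm (τ (T c))).2 : ℕ) = (c.2 : ℕ)),
      ((Equiv.Perm.sign τ : ℤ)) • permAction K V _ (σ * τ)

/-- The Schur module S_lam V, realized as the image of the Young symmetrizer on the
tensor power. -/
def schurModule {n : ℕ} (lam : Fin n → ℕ)
    (T : (Σ i : Fin n, Fin (lam i)) ≃ Fin (∑ i, lam i)) :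
    Submodule K (tpow K V (∑ i, lam i)) :=
  LinearMap.range (youngSymmetrizer K V lam T)

/-- The diagonal action of an endomorphism g of V on the tensor power. -/
def diagAction (d : ℕ) (g : V →ₗ[K] V) : tpow K V d →ₗ[K] tpow K V d :=
  PiTensorProduct.map (fun _ => g)

/-- The submodule of SL(V)-invariant tensors. -/
def slInvariants (d : ℕ) : Submodule K (tpow K V d) :=
  ⨅ (g : V →ₗ[K] V) (_ : LinearMap.det g = 1),
    LinearMap.eqLocus (diagAction K V d g) LinearMap.id

end

/-!
A nondegenerate form `B` turns tensors into multilinear forms: `x` becomes `contract B d x`. For `x`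
in the Schur module, this multilinear form is determined by its values at families that depend only
on the row of a box, that is, by the polynomial `v ↦ contract B d x (v ∘ boxRow T)` of highest
weight `lam` in `n` vectors. Gram–Schmidt, which adds to each vector multiples of earlier ones and
rescales, brings a generic family to a standard (orthonormal or symplectic) basis. The isometries
permute these bases transitively, so an invariant is determined by its value at one of them, and the
invariants have dimension at most one.

The torus of isometries acting on a standard basis by scalars forces `lam` to have even parts, or
even columns. Conversely, if the boxes can be matched in pairs within the rows, or within the
columns, contracting along the matching and applying the Young symmetrizer gives an invariant. Its
value at a standard basis is not zero: in the sum over the column group, every term that does not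
vanish is `1`.
-/

section Contraction

variable {K V : Type*} [Field K] [AddCommGroup V] [Module K V]

/-- The multilinear form `y ↦ ∏ c, B (u c) (y c)` attached to a tensor `⨂ u c`, extended linearly
to all tensors. For nondegenerate `B` it identifies tensors with multilinear forms. -/
noncomputable def contract (B : V →ₗ[K] V →ₗ[K] K) (d : ℕ) :
    tpow K V d →ₗ[K] MultilinearMap K (fun _ : Fin d => V) K :=
  PiTensorProduct.lift.symm.toLinearMap ∘ₗ PiTensorProduct.dualDistrib ∘ₗ
    PiTensorProduct.map fun _ => B

lemma contract_tprod (B : V →ₗ[K] V →ₗ[K] K) {d : ℕ} (u y : Fin d → V) :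
    contract B d (PiTensorProduct.tprod K u) y = ∏ c, B (u c) (y c) := by
  simp [contract]

lemma contract_bijective [FiniteDimensional K V] {B : V →ₗ[K] V →ₗ[K] K} (hB : B.SeparatingLeft)
    (d : ℕ) : Function.Bijective (contract B d) := by
  let toDual : V ≃ₗ[K] Module.Dual K V := LinearEquiv.ofInjectiveOfFinrankEq B
    (LinearMap.ker_eq_bot.1 (LinearMap.separatingLeft_iff_ker_eq_bot.1 hB))
    Subspace.dual_finrank_eq.symm
  exact ((PiTensorProduct.congr fun _ : Fin d => toDual).trans
    (PiTensorProduct.dualDistribEquiv.trans PiTensorProduct.lift.symm)).bijective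

lemma permAction_tprod {d : ℕ} (σ : Equiv.Perm (Fin d)) (u : Fin d → V) :
    permAction K V d σ (PiTensorProduct.tprod K u) = PiTensorProduct.tprod K (u ∘ σ.symm) :=
  PiTensorProduct.reindex_tprod σ u

lemma contract_permAction (B : V →ₗ[K] V →ₗ[K] K) {d : ℕ} (σ : Equiv.Perm (Fin d))
    (x : tpow K V d) (y : Fin d → V) :
    contract B d (permAction K V d σ x) y = contract B d x (y ∘ σ) := by
  induction x using PiTensorProduct.induction_on with
  | smul_tprod r u =>
    simp only [map_smul, smul_apply, permAction_tprod, contract_tprod]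
    congr 1
    exact (Fintype.prod_equiv σ _ _ fun c => by simp).symm
  | add a b ha hb => simp only [map_add, add_apply, ha, hb]

lemma contract_diagAction {B : V →ₗ[K] V →ₗ[K] K} {d : ℕ} {g : V →ₗ[K] V}
    (hg : ∀ v w, B (g v) (g w) = B v w) (x : tpow K V d) (y : Fin d → V) :
    contract B d (diagAction K V d g x) (g ∘ y) = contract B d x y := by
  induction x using PiTensorProduct.induction_on with
  | smul_tprod r u =>
    simp [diagAction, contract_tprod, hg]
  | add a b ha hb => simp only [map_add, add_apply, ha, hb]

end Contraction

section Labellings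

lemma comp_swap_of_eq {α β : Type*} [DecidableEq β] {f : β → α} {c c' : β} (h : f c = f c') :
    f ∘ Equiv.swap c c' = f := by
  rw [Equiv.comp_swap_eq_update, h, Function.update_eq_self, ← h, Function.update_eq_self]

variable {K V β ι : Type*} [Field K] [AddCommGroup V] [Module K V] [Fintype β] [DecidableEq β]

/-- The permutations preserving each fibre of a labelling `f`: the row group or the column group
of a tableau, when `f` gives the row or the column of an entry. -/
noncomputable def fiberPerms (f : β → ι) : Finset (Equiv.Perm β) :=
  Finset.univ.filter fun σ => ∀ c, f (σ c) = f c

lemma mem_fiberPerms {f : β → ι} {σ : Equiv.Perm β} :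
    σ ∈ fiberPerms f ↔ ∀ c, f (σ c) = f c := by
  simp [fiberPerms]

lemma one_mem_fiberPerms (f : β → ι) : 1 ∈ fiberPerms f :=
  mem_fiberPerms.2 fun _ => rfl

lemma mul_mem_fiberPerms {f : β → ι} {σ τ : Equiv.Perm β} (hσ : σ ∈ fiberPerms f)
    (hτ : τ ∈ fiberPerms f) : σ * τ ∈ fiberPerms f :=
  mem_fiberPerms.2 fun c => (mem_fiberPerms.1 hσ (τ c)).trans (mem_fiberPerms.1 hτ c)

lemma swap_mem_fiberPerms {f : β → ι} {c c' : β} (h : f c = f c') :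
    Equiv.swap c c' ∈ fiberPerms f :=
  mem_fiberPerms.2 <| congrFun <| comp_swap_of_eq h

/-- The antisymmetrization of a multilinear form over the permutations preserving a labelling. -/
noncomputable def fiberAlt (f : β → ι) (N : MultilinearMap K (fun _ : β => V) K) :
    MultilinearMap K (fun _ : β => V) K :=
  ∑ τ ∈ fiberPerms f, (Equiv.Perm.sign τ : ℤ) • N.domDomCongr τ

lemma fiberAlt_apply (f : β → ι) (N : MultilinearMap K (fun _ : β => V) K) (y : β → V) :
    fiberAlt f N y = ∑ τ ∈ fiberPerms f, (Equiv.Perm.sign τ : ℤ) • N (y ∘ τ) := by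
  simp only [fiberAlt, sum_apply]
  rfl

lemma fiberAlt_eq_zero_of_eq (f : β → ι) (N : MultilinearMap K (fun _ : β => V) K) {y : β → V}
    {c c' : β} (hne : c ≠ c') (hf : f c = f c') (hy : y c = y c') : fiberAlt f N y = 0 := by
  rw [fiberAlt_apply]
  refine Finset.sum_involution (fun τ _ => Equiv.swap c c' * τ) (fun τ _ => ?_) (fun τ _ _ => ?_)
    (fun τ hτ => mul_mem_fiberPerms (swap_mem_fiberPerms hf) hτ)
    fun τ _ => Equiv.swap_mul_self_mul c c' τ
  · rw [Equiv.Perm.coe_mul, ← Function.comp_assoc, comp_swap_of_eq hy]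
    simp [Equiv.Perm.sign_swap hne]
  · rwa [ne_eq, mul_eq_right, Equiv.swap_eq_one_iff]

lemma fiberAlt_update_add_smul (f : β → ι) (N : MultilinearMap K (fun _ : β => V) K) (y : β → V)
    {c c' : β} (hne : c ≠ c') (hf : f c = f c') (a : K) :
    fiberAlt f N (Function.update y c (y c + a • y c')) = fiberAlt f N y := by
  have repeated : fiberAlt f N (Function.update y c (y c')) = 0 :=
    fiberAlt_eq_zero_of_eq f N hne hf (by simp [hne.symm])
  rw [MultilinearMap.map_update_add, MultilinearMap.map_update_smul, Function.update_eq_self,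
    repeated, smul_zero, add_zero]

lemma fiberAlt_comp_update_add_smul {κ : Type*} [DecidableEq κ] (row : β → κ) (col : β → ι)
    (N : MultilinearMap K (fun _ : β => V) K) (v : κ → V) {i j : κ} (hij : i ≠ j)
    (above : ∀ c, row c = j → ∃ c', row c' = i ∧ col c' = col c) (a : K) :
    fiberAlt col N (Function.update v j (v j + a • v i) ∘ row) = fiberAlt col N (v ∘ row) := by
  have partially : ∀ s : Finset β, (∀ c ∈ s, row c = j) →
      fiberAlt col N (fun c => if c ∈ s then v j + a • v i else v (row c))
        = fiberAlt col N (v ∘ row) := by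
    intro s
    induction s using Finset.induction_on with
    | empty => intro; simp [Function.comp_def]
    | insert c s hcs ih =>
      intro hs
      have hc : row c = j := hs c (Finset.mem_insert_self c s)
      have hs' : ∀ x ∈ s, row x = j := fun x hx => hs x (Finset.mem_insert_of_mem hx)
      obtain ⟨c', hrow, hcol⟩ := above c hc
      have hc's : c' ∉ s := fun h => hij (hrow.symm.trans (hs' c' h))
      have hne : c ≠ c' := by rintro rfl; exact hij (hrow.symm.trans hc)
      refine Eq.trans ?_ ((fiberAlt_update_add_smul col N _ hne hcol.symm a).trans (ih hs'))
      congr 1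
      ext x
      rcases eq_or_ne x c with rfl | hx
      · simp [hcs, hc's, hrow, hc]
      · simp [hx]
  rw [← partially (Finset.univ.filter fun c => row c = j) (by simp)]
  congr 1
  ext c
  by_cases hc : row c = j <;> simp [hc]

end Labellings

section Polarization

variable {K V β ι : Type*} [Field K] [AddCommGroup V] [Module K V]

lemma exists_polynomial_eval_eq_map_add_smul [Finite β]
    (N : MultilinearMap K (fun _ : β => V) K) (y z : β → V) :
    ∃ p : Polynomial K, ∀ t, p.eval t = N (y + t • z) := by
  cases nonempty_fintype β
  refine ⟨∑ s : Finset β, (∏ c, if c ∈ s then 1 else Polynomial.X) *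
    Polynomial.C (N (s.piecewise y z)), fun t => ?_⟩
  rw [N.map_add_univ, Polynomial.eval_finsetSum]
  refine Finset.sum_congr rfl fun s _ => ?_
  have expand : s.piecewise y (t • z)
      = fun c => (if c ∈ s then 1 else t) • s.piecewise y z c := by
    ext c
    by_cases hc : c ∈ s <;> simp [hc]
  rw [expand, N.map_smul_univ, Polynomial.eval_mul, Polynomial.eval_C, Polynomial.eval_prod,
    smul_eq_mul]
  simp only [apply_ite (Polynomial.eval t), Polynomial.eval_one, Polynomial.eval_X]

variable [Fintype β]

lemma sum_single_eq_sum_single_iff_bijective (r : β → β) :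
    (∑ c, Finsupp.single (r c) 1 : β →₀ ℕ) = ∑ c, Finsupp.single c 1 ↔ Function.Bijective r := by
  refine ⟨fun h => Finite.surjective_iff_bijective.1 fun c => ?_,
    fun h => Fintype.sum_equiv (Equiv.ofBijective r h) _ _ fun _ => rfl⟩
  by_contra! hc
  simpa [Finsupp.finsetSum_apply, Finsupp.single_apply, hc] using DFunLike.congr_fun h c

lemma coeff_prod_X_comp [DecidableEq β] (r : β → β) :
    MvPolynomial.coeff (∑ c, Finsupp.single c 1) (∏ c, MvPolynomial.X (r c) : MvPolynomial β K)
      = if Function.Bijective r then 1 else 0 := by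
  have : (∏ c, MvPolynomial.X (r c) : MvPolynomial β K)
      = MvPolynomial.monomial (∑ c, Finsupp.single (r c) 1) 1 :=
    (MvPolynomial.monomial_sum_one _ _).symm
  rw [this, MvPolynomial.coeff_monomial]
  simp only [sum_single_eq_sum_single_iff_bijective]

lemma sum_map_comp_eq_zero [DecidableEq β] [Infinite K] (row : β → ι)
    (N : MultilinearMap K (fun _ : β => V) K)
    (hN : ∀ v : ι → V, N (v ∘ row) = 0) (y : β → V) :
    ∑ r : β → β with (∀ c, row (r c) = row c) ∧ Function.Bijective r, N (y ∘ r) = 0 := by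
  let P : MvPolynomial β K := ∑ r : β → β with ∀ c, row (r c) = row c,
    MvPolynomial.C (N (y ∘ r)) * ∏ c, MvPolynomial.X (r c)
  have P_eq_zero : P = 0 := by
    refine MvPolynomial.funext fun t => ?_
    rw [map_zero, ← hN fun i => ∑ c, (if row c = i then t c else 0) • y c]
    simp only [Function.comp_def, P]
    rw [N.map_sum, map_sum, Finset.sum_filter]
    refine Finset.sum_congr rfl fun r _ => ?_
    rw [N.map_smul_univ, Fintype.prod_ite_zero, smul_eq_mul]
    split_ifs
    · simp [mul_comm]
    · simp
  have coeff_P := congrArg (MvPolynomial.coeff (∑ c, Finsupp.single c 1)) P_eq_zero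
  simpa [P, MvPolynomial.coeff_sum, MvPolynomial.coeff_C_mul, coeff_prod_X_comp,
    ← Finset.sum_filter, Finset.filter_filter] using coeff_P

lemma eq_zero_of_forall_map_comp_eq_zero [DecidableEq β] [CharZero K] (row : β → ι)
    (N : MultilinearMap K (fun _ : β => V) K)
    (symm : ∀ σ ∈ fiberPerms row, ∀ y, N (y ∘ σ) = N y)
    (hN : ∀ v : ι → V, N (v ∘ row) = 0) : N = 0 := by
  ext y
  have sum_eq := sum_map_comp_eq_zero row N hN y
  rw [Finset.sum_congr rfl (g := fun _ => N y), Finset.sum_const, smul_eq_zero] at sum_eq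
  · refine sum_eq.resolve_left (Finset.card_ne_zero.2 ⟨id, ?_⟩)
    simp
  · intro r hr
    rw [Finset.mem_filter] at hr
    exact symm (Equiv.ofBijective r hr.2.2) (mem_fiberPerms.2 hr.2.1) y

end Polarization

section HighestWeight

variable {K V ι : Type*} [Field K] [AddCommGroup V] [Module K V] [Fintype ι] [LinearOrder ι]

/-- A highest-weight function of weight `lam` on families of vectors: it is polynomial on lines,
invariant under adding to a vector a multiple of an earlier one, and of degree `lam i` in the
`i`-th vector. -/
structure IsHighestWeight (lam : ι → ℕ) (F : (ι → V) → K) : Prop where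
  map_update_add_smul : ∀ (v : ι → V) {i j : ι} (c : K), i < j →
    F (Function.update v j (v j + c • v i)) = F v
  map_pi_smul : ∀ (v : ι → V) (s : ι → K), F (fun i => s i • v i) = (∏ i, s i ^ lam i) * F v
  exists_polynomial : ∀ v w : ι → V, ∃ p : Polynomial K, ∀ t, p.eval t = F (v + t • w)

lemma prod_mulSingle_pow (lam : ι → ℕ) (j : ι) (c : K) :
    ∏ i, (Pi.mulSingle j c : ι → K) i ^ lam i = c ^ lam j := by
  rw [Fintype.prod_eq_single j fun i hij => by simp [hij], Pi.mulSingle_eq_same]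

namespace IsHighestWeight

lemma const_one : IsHighestWeight (0 : ι → ℕ) (fun _ : ι → V => (1 : K)) where
  map_update_add_smul _ _ _ _ _ := rfl
  map_pi_smul _ _ := by simp
  exists_polynomial _ _ := ⟨1, fun _ => Polynomial.eval_one⟩

variable {lam : ι → ℕ} {F : (ι → V) → K} (hF : IsHighestWeight lam F)

include hF

lemma map_update_smul (v : ι → V) (j : ι) (c : K) :
    F (Function.update v j (c • v j)) = c ^ lam j * F v := by
  have scaled : Function.update v j (c • v j) = fun i => (Pi.mulSingle j c : ι → K) i • v i := by
    ext i
    rcases eq_or_ne i j with rfl | hij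
    · simp
    · simp [hij]
  rw [scaled, hF.map_pi_smul, prod_mulSingle_pow]

lemma map_update_add_sum (v : ι → V) {j : ι} (c : ι → K) {s : Finset ι} (hs : ∀ i ∈ s, i < j) :
    F (Function.update v j (v j + ∑ i ∈ s, c i • v i)) = F v := by
  induction s using Finset.induction_on with
  | empty => simp
  | insert i s his ih =>
    have hij : i < j := hs i (Finset.mem_insert_self i s)
    refine Eq.trans ?_ ((hF.map_update_add_smul _ (c i) hij).trans
      (ih fun x hx => hs x (Finset.mem_insert_of_mem hx)))
    rw [Finset.sum_insert his, Function.update_self, Function.update_of_ne hij.ne,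
      Function.update_idem, add_comm (c i • v i), add_assoc]

lemma eq_zero_of_eval_ne_zero [Infinite K] {q : Polynomial K} (hq : q ≠ 0) (v w : ι → V)
    (hvw : ∀ t, q.eval t ≠ 0 → F (v + t • w) = 0) : F v = 0 := by
  obtain ⟨p, hp⟩ := hF.exists_polynomial v w
  have p_mul_q : p * q = 0 := Polynomial.funext fun t => by
    rw [Polynomial.eval_mul, hp, Polynomial.eval_zero, mul_eq_zero]
    exact or_iff_not_imp_right.2 (hvw t)
  have p_zero : p = 0 := (mul_eq_zero.1 p_mul_q).resolve_right hq
  simpa [p_zero] using (hp 0).symm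

end IsHighestWeight

end HighestWeight

section StandardFamilies

variable {K V ι : Type*} [Field K] [AddCommGroup V] [Module K V] [LinearOrder ι]

/-- A pattern for the Gram matrices of standard bases, covering orthonormal and symplectic bases
at once: the `i`-th vector pairs with the `star i`-th to `sign i = ±1` and with the others
to `0`, where `star` fixes `i` or exchanges it with a neighbour. The fields `swapSign_eq` and
`isSquare` are what it takes to normalize a pair of vectors by scaling one of them. -/
structure GramPattern (K ι : Type*) [Field K] [LinearOrder ι] where
  star : ι → ι
  sign : ι → K
  /-- The factor by which a form changes when its arguments are exchanged. -/
  swapSign : K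
  star_star : ∀ i, star (star i) = i
  sign_mul_self : ∀ i, sign i * sign i = 1
  sign_star : ∀ i, sign (star i) = swapSign * sign i
  not_lt_star : ∀ {i j}, i < j → ¬ j < star i
  swapSign_eq : ∀ i, star i ≠ i → swapSign = -1
  isSquare : ∀ i, star i = i → ∀ c : K, IsSquare c

namespace GramPattern

/-- The Gram matrix of a standard basis. -/
def gram (P : GramPattern K ι) (i j : ι) : K :=
  if j = P.star i then P.sign i else 0

/-- The nondegenerate forms with the symmetry prescribed by a pattern. -/
structure IsCompatible (P : GramPattern K ι) (B : V →ₗ[K] V →ₗ[K] K) : Prop where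
  swap : ∀ v w, B w v = P.swapSign * B v w
  separatingLeft : B.SeparatingLeft

/-- The vectors `v i` with `i ∈ s` have the Gram matrix prescribed by the pattern. -/
def IsStandardOn (P : GramPattern K ι) (B : V →ₗ[K] V →ₗ[K] K) (s : Finset ι) (v : ι → V) : Prop :=
  ∀ i ∈ s, ∀ j ∈ s, B (v i) (v j) = P.gram i j

/-- The family `v` is a standard basis (for a nondegenerate form in dimension `card ι`). -/
def IsStandard [Fintype ι] (P : GramPattern K ι) (B : V →ₗ[K] V →ₗ[K] K) (v : ι → V) : Prop :=
  P.IsStandardOn B Finset.univ v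

variable {P : GramPattern K ι} {B : V →ₗ[K] V →ₗ[K] K} {s : Finset ι} {v : ι → V}

lemma sign_ne_zero (i : ι) : P.sign i ≠ 0 :=
  left_ne_zero_of_mul_eq_one (P.sign_mul_self i)

lemma gram_star (i : ι) : P.gram i (P.star i) = P.sign i :=
  if_pos rfl

variable (P) in
lemma gram_swap (i j : ι) : P.gram j i = P.swapSign * P.gram i j := by
  by_cases h : j = P.star i
  · subst h
    rw [gram_star, ← P.sign_star, gram, if_pos (P.star_star i).symm]
  · have h' : i ≠ P.star j := fun h' => h (by rw [h', P.star_star])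
    rw [gram, gram, if_neg h, if_neg h', mul_zero]

lemma star_mem_iff (hs : ∀ i ∈ s, P.star i ∈ s) {i : ι} : P.star i ∈ s ↔ i ∈ s :=
  ⟨fun h => P.star_star i ▸ hs _ h, hs i⟩

lemma IsCompatible.self_eq_zero [CharZero K] (hB : P.IsCompatible B) {i : ι} (hi : P.star i ≠ i)
    (x : V) : B x x = 0 := by
  have skew := hB.swap x x
  rw [P.swapSign_eq i hi, neg_one_mul] at skew
  exact self_eq_neg.1 skew

lemma IsStandardOn.exists_orthogonal_add_sum (hv : P.IsStandardOn B s v)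
    (hs : ∀ i ∈ s, P.star i ∈ s) (x : V) :
    ∃ c : ι → K, ∀ j ∈ s, B (x + ∑ i ∈ s, c i • v i) (v j) = 0 := by
  refine ⟨fun i => -P.sign i * B x (v (P.star i)), fun j hj => ?_⟩
  rw [map_add, LinearMap.add_apply, map_sum, LinearMap.sum_apply,
    Finset.sum_eq_single_of_mem (P.star j) (hs j hj)]
  · have gram_eq : P.gram (P.star j) j = P.sign (P.star j) := if_pos (P.star_star j).symm
    rw [map_smul, LinearMap.smul_apply, hv _ (hs j hj) _ hj, gram_eq, smul_eq_mul]
    simp only [P.star_star]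
    linear_combination (-B x (v j)) * P.sign_mul_self (P.star j)
  · intro i hi hij
    have hji : j ≠ P.star i := fun h => hij (by rw [h, P.star_star])
    rw [map_smul, LinearMap.smul_apply, hv i hi j hj, gram, if_neg hji, smul_zero]

lemma IsStandardOn.exists_orthogonal_pair [FiniteDimensional K V] (hB : P.IsCompatible B)
    (hv : P.IsStandardOn B s v) (hs : ∀ i ∈ s, P.star i ∈ s) (hcard : s.card < Module.finrank K V) :
    ∃ x y, (∀ j ∈ s, B x (v j) = 0) ∧ (∀ j ∈ s, B y (v j) = 0) ∧ B x y ≠ 0 := by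
  let pairings : V →ₗ[K] (s → K) := LinearMap.pi fun j => B.flip (v j)
  have ker_ne_bot : LinearMap.ker pairings ≠ ⊥ :=
    LinearMap.ker_ne_bot_of_finrank_lt (by simpa using hcard)
  obtain ⟨x, hx, x_ne_zero⟩ := Submodule.exists_mem_ne_zero_of_ne_bot ker_ne_bot
  have x_orth : ∀ j ∈ s, B x (v j) = 0 := fun j hj => congrFun hx ⟨j, hj⟩
  obtain ⟨y, hy⟩ : ∃ y, B x y ≠ 0 := by
    by_contra! h
    exact x_ne_zero (hB.separatingLeft x h)
  obtain ⟨c, hc⟩ := hv.exists_orthogonal_add_sum hs y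
  refine ⟨x, _, x_orth, hc, ?_⟩
  have sum_eq_zero : ∑ i ∈ s, c i * B x (v i) = 0 :=
    Finset.sum_eq_zero fun i hi => by rw [x_orth i hi, mul_zero]
  simpa [sum_eq_zero] using hy

/-- For a symmetric form, `y = x` is possible by polarization. -/
lemma IsStandardOn.exists_orthogonal_pair_of_star_eq [CharZero K] [FiniteDimensional K V]
    (hB : P.IsCompatible B) (hv : P.IsStandardOn B s v) (hs : ∀ i ∈ s, P.star i ∈ s)
    (hcard : s.card < Module.finrank K V) (a : ι) :
    ∃ x y, (∀ j ∈ s, B x (v j) = 0) ∧ (∀ j ∈ s, B y (v j) = 0) ∧ B x y ≠ 0 ∧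
      (P.star a = a → x = y) := by
  obtain ⟨x, y, hx, hy, hxy⟩ := hv.exists_orthogonal_pair hB hs hcard
  by_cases ha : P.star a = a
  · suffices ∃ z, (∀ j ∈ s, B z (v j) = 0) ∧ B z z ≠ 0 by
      obtain ⟨z, hz, hzz⟩ := this
      exact ⟨z, z, hz, hz, hzz, fun _ => rfl⟩
    have swapSign_one : P.swapSign = 1 := by
      have := P.sign_star a
      rwa [ha, eq_comm, mul_eq_right₀ (P.sign_ne_zero a)] at this
    by_contra! isotropic
    have hadd := isotropic (x + y) fun j hj => by simp [hx j hj, hy j hj]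
    have two_mul_eq_zero : 2 * B x y = 0 := by
      simpa [isotropic x hx, isotropic y hy, hB.swap x y, swapSign_one, two_mul] using hadd
    exact hxy (by simpa using two_mul_eq_zero)
  · exact ⟨x, y, hx, hy, hxy, fun h => absurd h ha⟩

lemma IsCompatible.eq_gram_of_orthogonal [CharZero K] (hB : P.IsCompatible B)
    (hs : ∀ i ∈ s, P.star i ∈ s) {a : ι} (ha : a ∉ s) (orth : ∀ j ∈ s, B (v a) (v j) = 0)
    (pair : B (v a) (v (P.star a)) = P.sign a) {j : ι} (hj : j = a ∨ j = P.star a ∨ j ∈ s) :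
    B (v a) (v j) = P.gram a j := by
  rcases hj with rfl | rfl | hj
  · by_cases haj : P.star j = j
    · rw [haj] at pair
      rw [pair, gram, if_pos haj.symm]
    · rw [hB.self_eq_zero haj, gram, if_neg (Ne.symm haj)]
  · rw [pair, gram_star]
  · rw [orth j hj, gram, if_neg]
    rintro rfl
    exact ha ((star_mem_iff hs).1 hj)

lemma IsStandardOn.insert_pair [CharZero K] (hB : P.IsCompatible B) (hv : P.IsStandardOn B s v)
    (hs : ∀ i ∈ s, P.star i ∈ s) {a : ι} (ha : a ∉ s)
    (orth_a : ∀ j ∈ s, B (v a) (v j) = 0) (orth_star : ∀ j ∈ s, B (v (P.star a)) (v j) = 0)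
    (pair : B (v a) (v (P.star a)) = P.sign a) :
    P.IsStandardOn B (insert a (insert (P.star a) s)) v := by
  have row_a := fun j => hB.eq_gram_of_orthogonal (j := j) hs ha orth_a pair
  have row_star := fun j => hB.eq_gram_of_orthogonal (j := j) hs
    (mt (star_mem_iff hs).1 ha) orth_star (by rw [P.star_star, hB.swap (v a), pair, P.sign_star])
  simp only [P.star_star] at row_star
  intro i hi j hj
  simp only [Finset.mem_insert] at hi hj
  rcases hi with rfl | rfl | hi
  · exact row_a j hj
  · exact row_star j (or_left_comm.1 hj)
  · rcases hj with rfl | rfl | hj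
    · rw [hB.swap (v j), row_a i (.inr (.inr hi)), ← P.gram_swap]
    · rw [hB.swap (v (P.star a)), row_star i (.inr (.inr hi)), ← P.gram_swap]
    · exact hv i hi j hj

end GramPattern

end StandardFamilies

section Vanishing

variable {K V ι : Type*} [Field K] [AddCommGroup V] [Module K V] [LinearOrder ι]
  {P : GramPattern K ι} {B : V →ₗ[K] V →ₗ[K] K} {s : Finset ι} {v : ι → V}

namespace GramPattern

lemma IsStandardOn.congr {w : ι → V} (hv : P.IsStandardOn B s v) (hvw : ∀ i ∈ s, w i = v i) :
    P.IsStandardOn B s w := fun i hi j hj => by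
  rw [hvw i hi, hvw j hj, hv i hi j hj]

lemma exists_scalar {a : ι} {x : K} (hx : x ≠ 0) :
    ∃ c : K, c ≠ 0 ∧ (if P.star a = a then c * c else c) * x = P.sign a := by
  by_cases h : P.star a = a
  · obtain ⟨c, hc⟩ := P.isSquare a h (P.sign a / x)
    have hcc : c * c ≠ 0 := hc ▸ div_ne_zero (P.sign_ne_zero a) hx
    exact ⟨c, left_ne_zero_of_mul hcc, by rw [if_pos h, ← hc, div_mul_cancel₀ _ hx]⟩
  · exact ⟨P.sign a / x, div_ne_zero (P.sign_ne_zero a) hx, by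
      rw [if_neg h, div_mul_cancel₀ _ hx]⟩

lemma IsStandardOn.exists_smul_insert_pair [CharZero K] (hB : P.IsCompatible B)
    (hv : P.IsStandardOn B s v) (hs : ∀ i ∈ s, P.star i ∈ s) {a : ι} (ha : a ∉ s)
    (orth_a : ∀ j ∈ s, B (v a) (v j) = 0) (orth_star : ∀ j ∈ s, B (v (P.star a)) (v j) = 0)
    (pair : B (v a) (v (P.star a)) ≠ 0) :
    ∃ c : K, c ≠ 0 ∧ P.IsStandardOn B (insert a (insert (P.star a) s))
      (Function.update v a (c • v a)) := by
  obtain ⟨c, hc, scaled⟩ := exists_scalar (P := P) pair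
  have agree : ∀ i ∈ s, Function.update v a (c • v a) i = v i := fun i hi =>
    Function.update_of_ne (ne_of_mem_of_not_mem hi ha) _ _
  refine ⟨c, hc, (hv.congr agree).insert_pair hB hs ha (fun j hj => ?_) (fun j hj => ?_) ?_⟩
  · simp [agree j hj, orth_a j hj]
  · rw [agree j hj]
    by_cases h : P.star a = a
    · simp [h, orth_a j hj]
    · rw [Function.update_of_ne h, orth_star j hj]
  · rw [← scaled]
    by_cases h : P.star a = a
    · simp [h, mul_assoc]
    · simp [h]

lemma exists_isLowerSet_insert_pair [Fintype ι] (lower : IsLowerSet (s : Set ι))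
    (hs : ∀ i ∈ s, P.star i ∈ s) (hne : s ≠ Finset.univ) :
    ∃ a ∉ s, IsLowerSet (insert a (insert (P.star a) s) : Set ι) ∧
      ∀ i ∈ insert a (insert (P.star a) s), P.star i ∈ insert a (insert (P.star a) s) := by
  have compl_nonempty : sᶜ.Nonempty := by
    rwa [Finset.nonempty_iff_ne_empty, ne_eq, Finset.compl_eq_empty_iff]
  let a := sᶜ.min' compl_nonempty
  have mem_of_lt : ∀ i < a, i ∈ s := fun i hi =>
    not_not.1 fun his => hi.not_ge (sᶜ.min'_le i (Finset.mem_compl.2 his))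
  refine ⟨a, Finset.mem_compl.1 (sᶜ.min'_mem compl_nonempty), fun i j hji hi => ?_, fun i hi => ?_⟩
  · rcases hi with rfl | rfl | hi
    · exact hji.eq_or_lt.imp_right fun h => .inr (mem_of_lt j h)
    · rcases hji.eq_or_lt with rfl | hj
      · exact .inr (.inl rfl)
      · have hja : j ≤ a := not_lt.1 fun haj => P.not_lt_star haj hj
        exact hja.eq_or_lt.imp_right fun h => .inr (mem_of_lt j h)
    · exact .inr (.inr (lower hji hi))
  · simp only [Finset.mem_insert] at hi ⊢
    rcases hi with rfl | rfl | hi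
    · exact .inr (.inl rfl)
    · exact .inl (P.star_star a)
    · exact .inr (.inr (hs i hi))

end GramPattern

namespace IsHighestWeight

variable [Fintype ι] {lam : ι → ℕ} {F : (ι → V) → K} (hF : IsHighestWeight lam F)

include hF

lemma exists_orthogonal (hv : P.IsStandardOn B s v) (hs : ∀ i ∈ s, P.star i ∈ s) {x : ι}
    (hx : ∀ i ∈ s, i < x) :
    ∃ w : ι → V, F w = F v ∧ (∀ i ≠ x, w i = v i) ∧ ∀ j ∈ s, B (w x) (v j) = 0 := by
  obtain ⟨c, hc⟩ := hv.exists_orthogonal_add_sum hs (v x)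
  refine ⟨_, hF.map_update_add_sum v c hx, fun i hi => Function.update_of_ne hi _ _, fun j hj => ?_⟩
  rw [Function.update_self, hc j hj]

/-- A generic vector is not isotropic: along the line through `v` in the direction of a family `w`
with `B (w a) (w (star a)) ≠ 0`, the pairing is a nonzero quadratic polynomial. -/
lemma eq_zero_of_orthogonal_pair [CharZero K] [FiniteDimensional K V] (hB : P.IsCompatible B)
    (hs : ∀ i ∈ s, P.star i ∈ s) {a : ι} (ha : a ∉ s) (hcard : s.card < Module.finrank K V)
    (vanish : ∀ v, P.IsStandardOn B (insert a (insert (P.star a) s)) v → F v = 0)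
    (hv : P.IsStandardOn B s v) (orth_a : ∀ j ∈ s, B (v a) (v j) = 0)
    (orth_star : ∀ j ∈ s, B (v (P.star a)) (v j) = 0) : F v = 0 := by
  obtain ⟨x, y, hx, hy, hxy, eq_of_star⟩ := hv.exists_orthogonal_pair_of_star_eq hB hs hcard a
  let w : ι → V := fun i => if i = a then x else if i = P.star a then y else 0
  have w_a : w a = x := if_pos rfl
  have w_star : w (P.star a) = y := by
    by_cases h : P.star a = a
    · rw [h, w_a, eq_of_star h]
    · rw [show w (P.star a) = _ from if_neg h, if_pos rfl]
  have agree : ∀ (t : K), ∀ i ∈ s, (v + t • w) i = v i := fun t i hi => by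
    have h : i ≠ a := ne_of_mem_of_not_mem hi ha
    have h' : i ≠ P.star a := ne_of_mem_of_not_mem hi (mt (GramPattern.star_mem_iff hs).1 ha)
    simp [w, h, h']
  let q : Polynomial K := .C (B x y) * .X ^ 2 +
    .C (B (v a) y + B x (v (P.star a))) * .X + .C (B (v a) (v (P.star a)))
  have q_ne_zero : q ≠ 0 := fun h => by
    simpa [q, hxy] using congrArg (Polynomial.coeff · 2) h
  refine hF.eq_zero_of_eval_ne_zero q_ne_zero v w fun t ht => ?_
  have q_eval : q.eval t = B ((v + t • w) a) ((v + t • w) (P.star a)) := by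
    have at_a : (v + t • w) a = v a + t • x := by rw [← w_a]; rfl
    have at_star : (v + t • w) (P.star a) = v (P.star a) + t • y := by rw [← w_star]; rfl
    simp only [q, at_a, at_star, map_add, map_smul, LinearMap.add_apply, LinearMap.smul_apply,
      smul_eq_mul, Polynomial.eval_add, Polynomial.eval_mul, Polynomial.eval_C, Polynomial.eval_pow,
      Polynomial.eval_X]
    ring
  obtain ⟨c, hc, standard⟩ := (hv.congr (agree t)).exists_smul_insert_pair hB hs ha
    (fun j hj => by simp [agree t j hj, w_a, orth_a j hj, hx j hj])
    (fun j hj => by simp [agree t j hj, w_star, orth_star j hj, hy j hj]) (q_eval ▸ ht)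
  have scaled := vanish _ standard
  rw [hF.map_update_smul] at scaled
  exact (mul_eq_zero.1 scaled).resolve_left (pow_ne_zero _ hc)

lemma eq_zero_of_insert_pair [CharZero K] [FiniteDimensional K V] (hB : P.IsCompatible B)
    (hs : ∀ i ∈ s, P.star i ∈ s) {a : ι} (ha : ∀ i ∈ s, i < a) (ha' : ∀ i ∈ s, i < P.star a)
    (hcard : s.card < Module.finrank K V)
    (vanish : ∀ v, P.IsStandardOn B (insert a (insert (P.star a) s)) v → F v = 0)
    (hv : P.IsStandardOn B s v) : F v = 0 := by
  obtain ⟨v₁, F_eq₁, agree₁, orth₁⟩ := hF.exists_orthogonal hv hs ha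
  replace agree₁ : ∀ i ∈ s, v₁ i = v i := fun i hi => agree₁ i (ha i hi).ne
  obtain ⟨v₂, F_eq₂, agree₂, orth₂⟩ := hF.exists_orthogonal (hv.congr agree₁) hs ha'
  have agree : ∀ i ∈ s, v₂ i = v i := fun i hi => by rw [agree₂ i (ha' i hi).ne, agree₁ i hi]
  have orth_star : ∀ j ∈ s, B (v₂ (P.star a)) (v₂ j) = 0 := fun j hj => by
    rw [agree j hj, ← agree₁ j hj, orth₂ j hj]
  have orth_a : ∀ j ∈ s, B (v₂ a) (v₂ j) = 0 := by
    by_cases h : a = P.star a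
    · rwa [← h] at orth_star
    · intro j hj
      rw [agree₂ a h, agree j hj, orth₁ j hj]
  rw [← F_eq₁, ← F_eq₂]
  exact hF.eq_zero_of_orthogonal_pair hB hs (fun h => (ha a h).false) hcard vanish
    (hv.congr agree) orth_a orth_star

/-- Generic families are brought to a standard basis, one `star`-orbit at a time, by the operations
under which a highest-weight function is semi-invariant. -/
theorem eq_zero_of_isStandard [CharZero K] [FiniteDimensional K V] (hB : P.IsCompatible B)
    (hcard : Fintype.card ι = Module.finrank K V) (vanish : ∀ v, P.IsStandard B v → F v = 0)
    (v : ι → V) : F v = 0 := by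
  suffices ∀ s : Finset ι, IsLowerSet (s : Set ι) → (∀ i ∈ s, P.star i ∈ s) →
      ∀ v, P.IsStandardOn B s v → F v = 0 from
    this ∅ (by simp [isLowerSet_empty]) (by simp) v fun _ h => by simp at h
  intro s
  induction hk : sᶜ.card using Nat.strong_induction_on generalizing s with | _ k ih
  intro lower hs v hv
  by_cases hne : s = Finset.univ
  · subst hne
    exact vanish v hv
  obtain ⟨a, ha, lower', hs'⟩ := GramPattern.exists_isLowerSet_insert_pair lower hs hne
  have lt_of_notMem : ∀ x ∉ s, ∀ i ∈ s, i < x := fun x hx i hi =>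
    lt_of_not_ge fun hxi => hx (lower hxi hi)
  refine hF.eq_zero_of_insert_pair hB hs (lt_of_notMem a ha)
    (lt_of_notMem _ (mt (GramPattern.star_mem_iff hs).1 ha))
    (hcard ▸ Finset.card_lt_univ_of_notMem ha) (ih _ ?_ _ rfl (by simpa using lower') hs') hv
  rw [← hk]
  refine Finset.card_lt_card (Finset.compl_ssubset_compl.2 ?_)
  exact (Finset.ssubset_iff_of_subset fun i hi => by simp [hi]).2 ⟨a, by simp, ha⟩

end IsHighestWeight

lemma GramPattern.IsCompatible.exists_isStandard [Fintype ι] [CharZero K] [FiniteDimensional K V]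
    (hB : P.IsCompatible B) (hcard : Fintype.card ι = Module.finrank K V) :
    ∃ e : ι → V, P.IsStandard B e := by
  by_contra! h
  exact one_ne_zero (IsHighestWeight.const_one.eq_zero_of_isStandard hB hcard
    (fun v hv => absurd hv (h v)) 0)

end Vanishing

section Tableaux

variable {K V : Type*} [Field K] [AddCommGroup V] [Module K V] {n : ℕ} {lam : Fin n → ℕ}
  (T : (Σ i : Fin n, Fin (lam i)) ≃ Fin (∑ i, lam i))

/-- The row of the box of the tableau `T` that contains `c`. -/
def boxRow (c : Fin (∑ i, lam i)) : Fin n :=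
  (T.symm c).1

/-- The column, counted from `0`, of the box of the tableau `T` that contains `c`. -/
def boxCol (c : Fin (∑ i, lam i)) : ℕ :=
  (T.symm c).2

lemma boxRow_apply (b : Σ i : Fin n, Fin (lam i)) : boxRow T (T b) = b.1 := by
  rw [boxRow, T.symm_apply_apply]

lemma boxCol_apply (b : Σ i : Fin n, Fin (lam i)) : boxCol T (T b) = b.2 := by
  rw [boxCol, T.symm_apply_apply]

lemma boxCol_lt (c : Fin (∑ i, lam i)) : boxCol T c < lam (boxRow T c) :=
  (T.symm c).2.isLt

lemma box_ext {c c' : Fin (∑ i, lam i)} (hrow : boxRow T c = boxRow T c')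
    (hcol : boxCol T c = boxCol T c') : c = c' :=
  T.symm.injective <| Sigma.ext hrow <| (Fin.heq_ext_iff (congrArg lam hrow)).2 hcol

lemma prod_boxRow (s : Fin n → K) : ∏ c, s (boxRow T c) = ∏ i, s i ^ lam i := by
  rw [← T.prod_comp, Fintype.prod_sigma]
  simp [boxRow_apply]

lemma contract_youngSymmetrizer (B : V →ₗ[K] V →ₗ[K] K) (z : tpow K V (∑ i, lam i))
    (y : Fin (∑ i, lam i) → V) :
    contract B _ (youngSymmetrizer K V lam T z) y
      = ∑ σ ∈ fiberPerms (boxRow T), fiberAlt (boxCol T) (contract B _ z) (y ∘ σ) := by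
  rw [youngSymmetrizer, LinearMap.sum_apply, map_sum, sum_apply]
  refine Finset.sum_congr ?_ fun σ _ => ?_
  · ext σ
    simp only [Finset.mem_filter_univ, mem_fiberPerms, T.surjective.forall, boxRow_apply]
    rfl
  rw [LinearMap.sum_apply, map_sum, sum_apply, fiberAlt_apply]
  refine Finset.sum_congr ?_ fun τ _ => ?_
  · ext τ
    simp only [Finset.mem_filter_univ, mem_fiberPerms, T.surjective.forall, boxCol_apply]
    rfl
  · change contract B _ ((Equiv.Perm.sign τ : ℤ) • permAction K V _ (σ * τ) z) y = _
    rw [map_zsmul, smul_apply, contract_permAction]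
    rfl

lemma contract_youngSymmetrizer_comp_boxRow (B : V →ₗ[K] V →ₗ[K] K) (z : tpow K V (∑ i, lam i))
    (v : Fin n → V) :
    contract B _ (youngSymmetrizer K V lam T z) (v ∘ boxRow T)
      = (fiberPerms (boxRow T)).card *
        fiberAlt (boxCol T) (contract B _ z) (v ∘ boxRow T) := by
  rw [contract_youngSymmetrizer, ← nsmul_eq_mul, ← Finset.sum_const]
  refine Finset.sum_congr rfl fun σ hσ => ?_
  have boxRow_comp : boxRow T ∘ σ = boxRow T := funext (mem_fiberPerms.1 hσ)
  rw [Function.comp_assoc, boxRow_comp]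

lemma contract_youngSymmetrizer_comp (B : V →ₗ[K] V →ₗ[K] K) (z : tpow K V (∑ i, lam i))
    {σ : Equiv.Perm (Fin (∑ i, lam i))} (hσ : σ ∈ fiberPerms (boxRow T))
    (y : Fin (∑ i, lam i) → V) :
    contract B _ (youngSymmetrizer K V lam T z) (y ∘ σ)
      = contract B _ (youngSymmetrizer K V lam T z) y := by
  rw [contract_youngSymmetrizer, contract_youngSymmetrizer]
  refine Finset.sum_equiv (Equiv.mulLeft σ) (fun ρ => ?_) fun ρ _ => rfl
  simp [mem_fiberPerms, mem_fiberPerms.1 hσ]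

variable {T} {B : V →ₗ[K] V →ₗ[K] K} {x : tpow K V (∑ i, lam i)}

lemma isHighestWeight_contract (hlam : Antitone lam) (hx : x ∈ schurModule K V lam T) :
    IsHighestWeight lam fun v : Fin n → V => contract B _ x (v ∘ boxRow T) where
  map_update_add_smul v i j c hij := by
    obtain ⟨z, rfl⟩ := hx
    rw [contract_youngSymmetrizer_comp_boxRow, contract_youngSymmetrizer_comp_boxRow,
      fiberAlt_comp_update_add_smul _ _ _ _ hij.ne]
    rintro c rfl
    exact ⟨T ⟨i, ⟨boxCol T c, (boxCol_lt T c).trans_le (hlam hij.le)⟩⟩, boxRow_apply T _,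
      boxCol_apply T _⟩
  map_pi_smul v s :=
    (MultilinearMap.map_smul_univ _ (s ∘ boxRow T) (v ∘ boxRow T)).trans
      (congrArg (· • _) (prod_boxRow T s))
  exists_polynomial v w := exists_polynomial_eval_eq_map_add_smul _ _ _

lemma eq_zero_of_contract_comp_boxRow_eq_zero [CharZero K] [FiniteDimensional K V]
    (hB : B.SeparatingLeft) (hx : x ∈ schurModule K V lam T)
    (h : ∀ v : Fin n → V, contract B _ x (v ∘ boxRow T) = 0) : x = 0 := by
  refine (map_eq_zero_iff _ (contract_bijective hB _).1).1 ?_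
  refine eq_zero_of_forall_map_comp_eq_zero (boxRow T) _ (fun σ hσ y => ?_) h
  obtain ⟨z, rfl⟩ := hx
  exact contract_youngSymmetrizer_comp T B z hσ y

end Tableaux

section Isometries

variable {K V ι : Type*} [Field K] [AddCommGroup V] [Module K V] [Fintype ι] [LinearOrder ι]
  {P : GramPattern K ι} {B : V →ₗ[K] V →ₗ[K] K} {e u : ι → V}

lemma GramPattern.IsStandard.linearIndependent (he : P.IsStandard B e) :
    LinearIndependent K e := by
  refine Fintype.linearIndependent_iff.2 fun a ha i => ?_
  have pairing : B (∑ j, a j • e j) (e (P.star i)) = a i * P.sign i := by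
    rw [map_sum, LinearMap.sum_apply, Fintype.sum_eq_single i]
    · rw [map_smul, LinearMap.smul_apply, he i (by simp) _ (by simp), P.gram_star, smul_eq_mul]
    · intro j hji
      have hij : P.star i ≠ P.star j := fun h => hji (by rw [← P.star_star j, ← h, P.star_star])
      rw [map_smul, LinearMap.smul_apply, he j (by simp) _ (by simp), gram, if_neg hij, smul_zero]
  rw [ha, map_zero, LinearMap.zero_apply, eq_comm] at pairing
  exact (mul_eq_zero.1 pairing).resolve_right (P.sign_ne_zero i)

lemma GramPattern.IsStandard.exists_isometry [FiniteDimensional K V]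
    (hcard : Fintype.card ι = Module.finrank K V)
    (he : P.IsStandard B e) (hu : P.IsStandard B u) :
    ∃ g : V →ₗ[K] V, (∀ v w, B (g v) (g w) = B v w) ∧ g ∘ e = u := by
  let b := basisOfLinearIndependentOfCardEqFinrank' e he.linearIndependent hcard
  have hb : ⇑b = e := coe_basisOfLinearIndependentOfCardEqFinrank' e he.linearIndependent hcard
  have g_apply : ∀ i, b.constr K u (e i) = u i := fun i => by
    rw [← hb, b.constr_basis]
  refine ⟨b.constr K u, fun v w => ?_, funext g_apply⟩
  have isometric : B.compl₁₂ (b.constr K u) (b.constr K u) = B :=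
    b.ext fun i => b.ext fun j => by
      rw [LinearMap.compl₁₂_apply, hb, g_apply, g_apply, hu i (by simp) j (by simp),
        he i (by simp) j (by simp)]
  exact LinearMap.congr_fun₂ isometric v w

lemma GramPattern.IsStandard.pi_smul (he : P.IsStandard B e) {s : ι → K}
    (hs : ∀ i, s i * s (P.star i) = 1) : P.IsStandard B fun i => s i • e i := by
  intro i hi j hj
  simp only [map_smul, LinearMap.smul_apply, he i hi j hj, gram, smul_eq_mul]
  split_ifs with hij
  · rw [hij, mul_left_comm, ← mul_assoc, hs, one_mul]
  · rw [mul_zero, mul_zero]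

/-- The tensors invariant under the linear isometries of `B`: the `O(V)`- or `Sp(V)`-invariants,
for a symmetric or skew form `B`. -/
def isometryInvariants (B : V →ₗ[K] V →ₗ[K] K) (d : ℕ) : Submodule K (tpow K V d) :=
  ⨅ (g : V →ₗ[K] V) (_ : ∀ v w, B (g v) (g w) = B v w),
    LinearMap.eqLocus (diagAction K V d g) LinearMap.id

lemma mem_isometryInvariants {d : ℕ} {x : tpow K V d} :
    x ∈ isometryInvariants B d ↔
      ∀ g : V →ₗ[K] V, (∀ v w, B (g v) (g w) = B v w) → diagAction K V d g x = x := by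
  simp [isometryInvariants]

lemma contract_comp_eq_of_isStandard [FiniteDimensional K V]
    (hcard : Fintype.card ι = Module.finrank K V) (he : P.IsStandard B e) (hu : P.IsStandard B u)
    {d : ℕ} {x : tpow K V d} (hx : x ∈ isometryInvariants B d) (r : Fin d → ι) :
    contract B d x (u ∘ r) = contract B d x (e ∘ r) := by
  obtain ⟨g, hg, rfl⟩ := he.exists_isometry hcard hu
  rw [← contract_diagAction hg x (e ∘ r), mem_isometryInvariants.1 hx g hg, Function.comp_assoc]

end Isometries

section SchurInvariants

variable {K V : Type*} [Field K] [AddCommGroup V] [Module K V] [FiniteDimensional K V] {n : ℕ}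
  {P : GramPattern K (Fin n)} {B : V →ₗ[K] V →ₗ[K] K} {e : Fin n → V}
  {lam : Fin n → ℕ} {T : (Σ i : Fin n, Fin (lam i)) ≃ Fin (∑ i, lam i)}
  {x : tpow K V (∑ i, lam i)}

lemma eq_zero_of_contract_isStandard_eq_zero [CharZero K] (hB : P.IsCompatible B)
    (hn : Module.finrank K V = n) (hlam : Antitone lam) (he : P.IsStandard B e)
    (hx : x ∈ schurModule K V lam T ⊓ isometryInvariants B _)
    (h : contract B _ x (e ∘ boxRow T) = 0) : x = 0 := by
  have hcard : Fintype.card (Fin n) = Module.finrank K V := by rw [Fintype.card_fin, hn]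
  refine eq_zero_of_contract_comp_boxRow_eq_zero hB.separatingLeft hx.1
    ((isHighestWeight_contract hlam hx.1).eq_zero_of_isStandard hB hcard fun v hv => ?_)
  rw [contract_comp_eq_of_isStandard hcard he hv hx.2, h]

/-- The torus of isometries acts on a standard basis by scalars, so a nonzero invariant has
trivial weight. -/
lemma prod_pow_eq_one_of_contract_ne_zero (hn : Module.finrank K V = n) (he : P.IsStandard B e)
    (hx : x ∈ isometryInvariants B _) (h : contract B _ x (e ∘ boxRow T) ≠ 0) {s : Fin n → K}
    (hs : ∀ i, s i * s (P.star i) = 1) : ∏ i, s i ^ lam i = 1 := by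
  have scaled : contract B _ x ((fun i => s i • e i) ∘ boxRow T)
      = (∏ i, s i ^ lam i) * contract B _ x (e ∘ boxRow T) := by
    rw [← prod_boxRow T]
    exact MultilinearMap.map_smul_univ _ (s ∘ boxRow T) (e ∘ boxRow T)
  rw [contract_comp_eq_of_isStandard (by rw [Fintype.card_fin, hn]) he (he.pi_smul hs) hx] at scaled
  exact (mul_eq_right₀ h).1 scaled.symm

theorem finrank_schurModule_inf_isometryInvariants [CharZero K] (hB : P.IsCompatible B)
    (hn : Module.finrank K V = n) (hlam : Antitone lam) (he : P.IsStandard B e) :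
    Module.finrank K ↥(schurModule K V lam T ⊓ isometryInvariants B (∑ i, lam i))
      = if ∃ x ∈ schurModule K V lam T ⊓ isometryInvariants B (∑ i, lam i),
          contract B _ x (e ∘ boxRow T) ≠ 0 then 1 else 0 := by
  have eq_zero {x} (hx) := eq_zero_of_contract_isStandard_eq_zero (T := T) (x := x) hB hn hlam he hx
  set I := schurModule K V lam T ⊓ isometryInvariants B (∑ i, lam i)
  split_ifs with h
  · obtain ⟨x, hx, x_ne⟩ := h
    have x_ne_zero : (⟨x, hx⟩ : I) ≠ 0 := fun h0 => x_ne (by simp [show x = 0 by simpa using h0])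
    refine finrank_eq_one_iff'.2 ⟨⟨x, hx⟩, x_ne_zero, fun ⟨w, hw⟩ => ?_⟩
    refine ⟨contract B _ w (e ∘ boxRow T) / contract B _ x (e ∘ boxRow T), Subtype.ext ?_⟩
    refine sub_eq_zero.1 (eq_zero (I.sub_mem (I.smul_mem _ hx) hw) ?_)
    simp [div_mul_cancel₀ _ x_ne]
  · push Not at h
    rw [(Submodule.eq_bot_iff I).2 fun x hx => eq_zero hx (h x hx), finrank_bot]

end SchurInvariants

section Matchings

lemma sign_eq_prod_of_comm_not {A : Type*} [Fintype A] [DecidableEq A]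
    {τ : Equiv.Perm (A × Bool)}
    (hτ : ∀ a, τ (a, true) = ((τ (a, false)).1, !(τ (a, false)).2)) :
    (Equiv.Perm.sign τ : ℤ) = ∏ a, if (τ (a, false)).2 then -1 else 1 := by
  have injective : Function.Injective fun a => (τ (a, false)).1 := by
    intro a a' haa'
    rcases eq_or_ne (τ (a, false)).2 (τ (a', false)).2 with h | h
    · exact congrArg Prod.fst (τ.injective (Prod.ext haa' h))
    · have crossed : τ (a', false) = τ (a, true) := by
        rw [hτ]
        exact Prod.ext haa'.symm (Bool.eq_not.2 h.symm)
      simpa using τ.injective crossed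
  let π : Equiv.Perm A := Equiv.ofBijective _ (Finite.injective_iff_bijective.1 injective)
  let ρ : A → Equiv.Perm Bool := fun a => if (τ (a, false)).2 then Equiv.swap false true else 1
  have factored : τ = Equiv.prodCongrLeft (fun _ : Bool => π) * Equiv.prodCongrRight ρ := by
    ext ⟨a, b⟩ : 1
    cases b
    · refine Prod.ext rfl ?_
      cases h : (τ (a, false)).2 <;> simp [ρ, h]
    · rw [hτ]
      refine Prod.ext rfl ?_
      cases h : (τ (a, false)).2 <;> simp [ρ, h]
  have sign_τ : Equiv.Perm.sign τ = ∏ a, Equiv.Perm.sign (ρ a) := by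
    rw [factored, Equiv.Perm.sign_mul, Equiv.Perm.sign_prodCongrLeft,
      Equiv.Perm.sign_prodCongrRight, Fintype.prod_bool, Int.units_mul_self, one_mul]
  rw [sign_τ, Units.coe_prod]
  refine Finset.prod_congr rfl fun a _ => ?_
  cases h : (τ (a, false)).2 <;> simp [ρ, h]

variable {K V A β ι κ : Type*} [Field K] [AddCommGroup V] [Module K V]

/-- A bilinear form as a multilinear form on pairs of vectors. -/
def boolForm (B : V →ₗ[K] V →ₗ[K] K) : MultilinearMap K (fun _ : Bool => V) K where
  toFun y := B (y false) (y true)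
  map_update_add' _ b _ _ := by cases b <;> simp
  map_update_smul' _ b _ _ := by cases b <;> simp

/-- The complete contraction of tensors along a perfect matching `E (a, false) ↔ E (a, true)` of
their indices. -/
noncomputable def pairForm [Fintype A] (B : V →ₗ[K] V →ₗ[K] K) (E : A × Bool ≃ β) :
    MultilinearMap K (fun _ : β => V) K :=
  ((MultilinearMap.mkPiAlgebra K A K).compMultilinearMap fun _ => boolForm B).domDomCongr
    ((Equiv.sigmaEquivProd A Bool).trans E)

lemma pairForm_apply [Fintype A] (B : V →ₗ[K] V →ₗ[K] K) (E : A × Bool ≃ β) (y : β → V) :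
    pairForm B E y = ∏ a, B (y (E (a, false))) (y (E (a, true))) :=
  rfl

namespace GramPattern

variable [LinearOrder ι]

/-- A perfect matching of the boxes of a diagram, viewed through their rows and columns, such that
matched boxes lie in rows exchanged by `star`, the column of a box determines that of its partner,
and in the columns of the boxes `E (a, false)` the sign of a row tells apart the two kinds of
boxes. -/
structure IsMatching (P : GramPattern K ι) (row : β → ι) (col : β → κ) (E : A × Bool ≃ β) :
    Prop where
  row_not : ∀ a b, row (E (a, !b)) = P.star (row (E (a, b)))
  col_not : ∀ {a b a' b'}, col (E (a, b)) = col (E (a', b')) →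
    col (E (a, !b)) = col (E (a', !b'))
  sign_row : ∀ {a b a'}, col (E (a, b)) = col (E (a', false)) →
    P.sign (row (E (a, b))) = if b then -1 else 1

namespace IsMatching

variable {P : GramPattern K ι} {row : β → ι} {col : β → κ} {E : A × Bool ≃ β}
  (hE : P.IsMatching row col E) (box_inj : ∀ {c c'}, row c = row c' → col c = col c' → c = c')
  [Fintype β] [DecidableEq β]

include hE

include box_inj in
lemma symm_apply_true {τ : Equiv.Perm β} (hτ : τ ∈ fiberPerms col) {a : A}
    (ha : row (τ (E (a, true))) = P.star (row (τ (E (a, false))))) :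
    E.symm (τ (E (a, true)))
      = ((E.symm (τ (E (a, false)))).1, !(E.symm (τ (E (a, false)))).2) := by
  obtain ⟨⟨a', b'⟩, hp⟩ := E.surjective (τ (E (a, false)))
  have col_eq : col (E (a', b')) = col (E (a, false)) := by rw [hp, mem_fiberPerms.1 hτ]
  rw [← hp, E.symm_apply_apply, E.symm_apply_eq]
  refine box_inj ?_ ?_
  · rw [ha, ← hp, hE.row_not]
  · rw [mem_fiberPerms.1 hτ, hE.col_not col_eq, Bool.not_false]

variable {B : V →ₗ[K] V →ₗ[K] K} {e : ι → V} [Fintype ι] [Fintype A]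
  (he : P.IsStandard B e)

include box_inj he

lemma sign_smul_pairForm {τ : Equiv.Perm β} (hτ : τ ∈ fiberPerms col) :
    (Equiv.Perm.sign τ : ℤ) • pairForm B E ((e ∘ row) ∘ τ)
      = if ∀ a, row (τ (E (a, true))) = P.star (row (τ (E (a, false)))) then 1 else 0 := by
  have pairForm_eq : pairForm B E ((e ∘ row) ∘ τ)
      = ∏ a, P.gram (row (τ (E (a, false)))) (row (τ (E (a, true)))) :=
    Finset.prod_congr rfl fun a _ => he _ (Finset.mem_univ _) _ (Finset.mem_univ _)
  split_ifs with h
  · have sign_τ : (Equiv.Perm.sign τ : ℤ)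
        = ∏ a, if (E.symm (τ (E (a, false)))).2 then -1 else 1 := by
      rw [← Equiv.Perm.sign_permCongr E.symm]
      exact sign_eq_prod_of_comm_not fun a => hE.symm_apply_true box_inj hτ (h a)
    have pairForm_eq_sign : pairForm B E ((e ∘ row) ∘ τ) = ((Equiv.Perm.sign τ : ℤ) : K) := by
      rw [pairForm_eq, sign_τ, Int.cast_prod]
      refine Finset.prod_congr rfl fun a _ => ?_
      obtain ⟨⟨a', b'⟩, hp⟩ := E.surjective (τ (E (a, false)))
      have col_eq : col (E (a', b')) = col (E (a, false)) := by rw [hp, mem_fiberPerms.1 hτ]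
      rw [h a, P.gram_star, ← hp, hE.sign_row col_eq, E.symm_apply_apply]
      push_cast
      rfl
    rw [pairForm_eq_sign, zsmul_eq_mul, ← Int.cast_mul, ← Units.val_mul, Int.units_mul_self,
      Units.val_one, Int.cast_one]
  · obtain ⟨a, ha⟩ := not_forall.1 h
    rw [pairForm_eq, Finset.prod_eq_zero (Finset.mem_univ a) (if_neg ha), smul_zero]

lemma fiberAlt_pairForm_ne_zero [CharZero K] : fiberAlt col (pairForm B E) (e ∘ row) ≠ 0 := by
  rw [fiberAlt_apply, Finset.sum_congr rfl fun τ hτ => hE.sign_smul_pairForm box_inj he hτ,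
    Finset.sum_boole, Nat.cast_ne_zero]
  refine Finset.card_ne_zero_of_mem (Finset.mem_filter.2 ⟨one_mem_fiberPerms col, fun a => ?_⟩)
  exact hE.row_not a false

end IsMatching

end GramPattern

end Matchings

section Existence

variable {K V : Type*} [Field K] [AddCommGroup V] [Module K V] [FiniteDimensional K V]
  {B : V →ₗ[K] V →ₗ[K] K}

lemma mem_isometryInvariants_of_contract_comp (hB : B.SeparatingLeft) {d : ℕ} {x : tpow K V d}
    (hx : ∀ g : V →ₗ[K] V, (∀ v w, B (g v) (g w) = B v w) →
      ∀ y, contract B d x (g ∘ y) = contract B d x y) : x ∈ isometryInvariants B d := by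
  refine mem_isometryInvariants.2 fun g hg => (contract_bijective hB d).1 ?_
  have injective : Function.Injective g := by
    refine (injective_iff_map_eq_zero g).2 fun v hv => hB v fun w => ?_
    rw [← hg, hv, map_zero, LinearMap.zero_apply]
  ext y
  obtain ⟨y, rfl⟩ := (LinearMap.injective_iff_surjective.1 injective).comp_left y
  rw [contract_diagAction hg, hx g hg]

lemma exists_invariant_of_isMatching [CharZero K] {n : ℕ} {P : GramPattern K (Fin n)}
    (hB : P.IsCompatible B) {e : Fin n → V} (he : P.IsStandard B e) {lam : Fin n → ℕ}
    {T : (Σ i : Fin n, Fin (lam i)) ≃ Fin (∑ i, lam i)} {A : Type*} [Finite A]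
    {E : A × Bool ≃ Fin (∑ i, lam i)} (hE : P.IsMatching (boxRow T) (boxCol T) E) :
    ∃ x ∈ schurModule K V lam T ⊓ isometryInvariants B _, contract B _ x (e ∘ boxRow T) ≠ 0 := by
  cases nonempty_fintype A
  obtain ⟨z, hz⟩ := (contract_bijective hB.separatingLeft _).2 (pairForm B E)
  refine ⟨youngSymmetrizer K V lam T z, ⟨⟨z, rfl⟩, ?_⟩, ?_⟩
  · refine mem_isometryInvariants_of_contract_comp hB.separatingLeft fun g hg y => ?_
    simp only [contract_youngSymmetrizer, fiberAlt_apply, hz, pairForm_apply, Function.comp_apply,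
      hg]
  · rw [contract_youngSymmetrizer_comp_boxRow, hz]
    exact mul_ne_zero (Nat.cast_ne_zero.2 (Finset.card_ne_zero_of_mem (one_mem_fiberPerms _)))
      (hE.fiberAlt_pairForm_ne_zero (box_ext T) he)

end Existence

lemma toNat_not (b : Bool) : (!b).toNat = 1 - b.toNat := by
  cases b <;> rfl

section Orthogonal

/-- The pattern of orthonormal bases. -/
def orthonormalPattern {K : Type*} [Field K] (hK : ∀ c : K, IsSquare c) (ι : Type*)
    [LinearOrder ι] : GramPattern K ι where
  star := id
  sign _ := 1
  swapSign := 1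
  star_star _ := rfl
  sign_mul_self _ := one_mul 1
  sign_star _ := (one_mul 1).symm
  not_lt_star := lt_asymm
  swapSign_eq _ h := absurd rfl h
  isSquare _ _ := hK

/-- The matching of the boxes in the columns `2 * l` and `2 * l + 1` of each row. -/
def rowMatching {n : ℕ} {k lam : Fin n → ℕ} (hk : ∀ i, k i * 2 = lam i) :
    (Σ i : Fin n, Fin (k i)) × Bool ≃ Σ i : Fin n, Fin (lam i) :=
  (Equiv.sigmaProdDistrib _ _).trans <| Equiv.sigmaCongrRight fun i =>
    ((Equiv.refl _).prodCongr finTwoEquiv.symm).trans <| finProdFinEquiv.trans <| finCongr (hk i)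

variable {K : Type*} [Field K] {n : ℕ} {lam : Fin n → ℕ}
  {T : (Σ i : Fin n, Fin (lam i)) ≃ Fin (∑ i, lam i)}

lemma isMatching_rowMatching (hK : ∀ c : K, IsSquare c) {k : Fin n → ℕ}
    (hk : ∀ i, k i * 2 = lam i) :
    (orthonormalPattern hK (Fin n)).IsMatching (boxRow T) (boxCol T)
      ((rowMatching hk).trans T) := by
  have row (a b) : boxRow T ((rowMatching hk).trans T (a, b)) = a.1 := boxRow_apply T _
  have col (a b) : boxCol T ((rowMatching hk).trans T (a, b)) = b.toNat + 2 * a.2 := by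
    refine (boxCol_apply T _).trans ?_
    cases b <;> rfl
  constructor
  · intro a b
    exact (row a _).trans (row a b).symm
  · intro a b a' b' h
    have hb := b.toNat_le
    have hb' := b'.toNat_le
    rw [col, col] at h
    rw [col, col, toNat_not, toNat_not]
    omega
  · intro a b a' h
    rw [col, col, Bool.toNat_false] at h
    cases b
    · rfl
    · rw [Bool.toNat_true] at h
      omega

lemma even_of_forall_prod_pow_eq_one [CharZero K]
    (h : ∀ s : Fin n → K, (∀ i, s i * s i = 1) → ∏ i, s i ^ lam i = 1) (i : Fin n) :
    Even (lam i) := by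
  have neg_one_pow : (-1 : K) ^ lam i = 1 := by
    rw [← prod_mulSingle_pow lam]
    exact h _ fun j => by rcases eq_or_ne j i with rfl | hj <;> simp [*]
  exact (neg_one_pow_eq_one_iff_even (by norm_num)).1 neg_one_pow

variable {V : Type*} [AddCommGroup V] [Module K V] [FiniteDimensional K V]
  {B : V →ₗ[K] V →ₗ[K] K}

theorem finrank_schurModule_inf_isometryInvariants_of_symm [CharZero K]
    (hK : ∀ c : K, IsSquare c) (hn : Module.finrank K V = n) (symm : ∀ v w, B v w = B w v)
    (hB : B.SeparatingLeft) (hlam : Antitone lam) :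
    Module.finrank K ↥(schurModule K V lam T ⊓ isometryInvariants B (∑ i, lam i))
      = if ∀ i, Even (lam i) then 1 else 0 := by
  have compatible : (orthonormalPattern hK (Fin n)).IsCompatible B :=
    ⟨fun v w => (symm w v).trans (one_mul _).symm, hB⟩
  obtain ⟨e, he⟩ := compatible.exists_isStandard (by rw [Fintype.card_fin, hn])
  rw [finrank_schurModule_inf_isometryInvariants compatible hn hlam he]
  refine if_congr ⟨fun ⟨x, hx, x_ne⟩ => ?_, fun even => ?_⟩ rfl rfl
  · exact even_of_forall_prod_pow_eq_one fun s hs =>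
      prod_pow_eq_one_of_contract_ne_zero hn he hx.2 x_ne hs
  · exact exists_invariant_of_isMatching compatible he
      (isMatching_rowMatching hK fun i => Nat.div_mul_cancel (even i).two_dvd)

end Orthogonal

section Symplectic

/-- The index `2 * a + b`, with `b` read as `0` or `1`: the vectors of a symplectic basis are
paired as `(2 * a, 2 * a + 1)`. -/
def pairIndex (m : ℕ) : Fin m × Bool ≃ Fin (2 * m) :=
  ((Equiv.refl _).prodCongr finTwoEquiv.symm).trans <|
    finProdFinEquiv.trans <| finCongr (mul_comm m 2)

lemma val_pairIndex {m : ℕ} (a : Fin m) (b : Bool) :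
    (pairIndex m (a, b) : ℕ) = b.toNat + 2 * a := by
  cases b <;> rfl

/-- The pattern of symplectic bases. -/
def symplecticPattern (K : Type*) [Field K] (m : ℕ) : GramPattern K (Fin (2 * m)) where
  star i := pairIndex m (((pairIndex m).symm i).1, !((pairIndex m).symm i).2)
  sign i := if ((pairIndex m).symm i).2 then -1 else 1
  swapSign := -1
  star_star i := by simp
  sign_mul_self i := by split_ifs <;> simp
  sign_star i := by cases ((pairIndex m).symm i).2 <;> simp
  not_lt_star {i j} hij := by
    obtain ⟨⟨a, b⟩, rfl⟩ := (pairIndex m).surjective i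
    have hb := b.toNat_le
    simp only [Equiv.symm_apply_apply, Fin.lt_def, val_pairIndex, toNat_not]
    rw [Fin.lt_def, val_pairIndex] at hij
    omega
  swapSign_eq _ _ := rfl
  isSquare i hi := by simp [← Equiv.eq_symm_apply, Prod.ext_iff] at hi

variable {K : Type*} [Field K] {m : ℕ} {mu : Fin (2 * m) → ℕ}
  {S : (Σ i : Fin (2 * m), Fin (mu i)) ≃ Fin (∑ i, mu i)}

lemma symplecticPattern_star_pairIndex (a : Fin m) (b : Bool) :
    (symplecticPattern K m).star (pairIndex m (a, b)) = pairIndex m (a, !b) := by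
  simp [symplecticPattern]

lemma symplecticPattern_sign_pairIndex (a : Fin m) (b : Bool) :
    (symplecticPattern K m).sign (pairIndex m (a, b)) = if b then -1 else 1 := by
  simp [symplecticPattern]

/-- The matching of the boxes in the rows `2 * a` and `2 * a + 1` of each column. -/
def colMatching {k : Fin m → ℕ} (hk : ∀ a b, k a = mu (pairIndex m (a, b))) :
    (Σ a : Fin m, Fin (k a)) × Bool ≃ Σ i : Fin (2 * m), Fin (mu i) :=
  Equiv.trans
    { toFun := fun p => ⟨(p.1.1, p.2), Fin.cast (hk _ _) p.1.2⟩
      invFun := fun b => (⟨b.1.1, Fin.cast (hk _ _).symm b.2⟩, b.1.2) }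
    (Equiv.sigmaCongrLeft (β := fun i => Fin (mu i)) (pairIndex m))

lemma isMatching_colMatching {k : Fin m → ℕ} (hk : ∀ a b, k a = mu (pairIndex m (a, b))) :
    (symplecticPattern K m).IsMatching (boxRow S) (boxCol S) ((colMatching hk).trans S) := by
  have row (a b) : boxRow S ((colMatching hk).trans S (a, b)) = pairIndex m (a.1, b) :=
    boxRow_apply S _
  have col (a b) : boxCol S ((colMatching hk).trans S (a, b)) = a.2 := boxCol_apply S _
  constructor
  · intro a b
    rw [row, row, symplecticPattern_star_pairIndex]
  · intro a b a' b' h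
    rwa [col, col] at h ⊢
  · intro a b a' _
    rw [row, symplecticPattern_sign_pairIndex]

lemma pairIndex_eq_of_forall_prod_pow_eq_one [CharZero K]
    (h : ∀ s : Fin (2 * m) → K, (∀ i, s i * s ((symplecticPattern K m).star i) = 1) →
      ∏ i, s i ^ mu i = 1) (a : Fin m) :
    mu (pairIndex m (a, false)) = mu (pairIndex m (a, true)) := by
  have two_pow := h (Pi.mulSingle (pairIndex m (a, false)) 2 *
      Pi.mulSingle (pairIndex m (a, true)) 2⁻¹) fun i => by
    obtain ⟨⟨a', b⟩, rfl⟩ := (pairIndex m).surjective i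
    rw [symplecticPattern_star_pairIndex]
    rcases eq_or_ne a' a with rfl | ha
    · cases b <;> simp
    · simp [ha]
  simp only [Pi.mul_apply, mul_pow, Finset.prod_mul_distrib, prod_mulSingle_pow] at two_pow
  rw [inv_pow, mul_inv_eq_one₀ (pow_ne_zero _ two_ne_zero)] at two_pow
  exact Nat.pow_right_injective le_rfl (by exact_mod_cast two_pow)

lemma lt_iff_val_lt_card {n : ℕ} {lam : Fin n → ℕ} (hlam : Antitone lam) (j : ℕ) (i : Fin n) :
    j < lam i ↔ (i : ℕ) < (Finset.univ.filter fun i => j < lam i).card := by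
  refine ⟨fun hi => ?_, fun hi => ?_⟩
  · rw [Nat.lt_iff_add_one_le, ← Fin.card_Iic]
    exact Finset.card_le_card fun x hx =>
      (Finset.mem_filter_univ x).2 (hi.trans_le (hlam (Finset.mem_Iic.1 hx)))
  · contrapose! hi
    rw [← Fin.card_Iio]
    refine Finset.card_le_card fun x hx => Finset.mem_Iio.2 (lt_of_not_ge fun hix => ?_)
    exact ((Finset.mem_filter_univ x).1 hx).not_ge ((hlam hix).trans hi)

lemma forall_pairIndex_eq_iff_forall_even_card (hmu : Antitone mu) :
    (∀ a, mu (pairIndex m (a, false)) = mu (pairIndex m (a, true))) ↔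
      ∀ j : ℕ, Even (Finset.univ.filter fun i => j < mu i).card := by
  refine ⟨fun h j => ?_, fun h a => eq_of_forall_lt_iff fun j => ?_⟩
  · by_contra! odd
    obtain ⟨t, ht⟩ := Nat.not_even_iff_odd.1 odd
    have card_le : (Finset.univ.filter fun i => j < mu i).card ≤ 2 * m := by
      simpa using Finset.card_filter_le Finset.univ fun i => j < mu i
    have rows_iff := h ⟨t, by omega⟩ ▸ lt_iff_val_lt_card hmu j (pairIndex m (⟨t, by omega⟩, false))
    rw [lt_iff_val_lt_card hmu, val_pairIndex, val_pairIndex, ht] at rows_iff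
    simp at rows_iff
  · obtain ⟨t, ht⟩ := h j
    rw [lt_iff_val_lt_card hmu, lt_iff_val_lt_card hmu, val_pairIndex, val_pairIndex, ht,
      Bool.toNat_false, Bool.toNat_true]
    omega

variable {W : Type*} [AddCommGroup W] [Module K W] [FiniteDimensional K W]
  {C : W →ₗ[K] W →ₗ[K] K}

theorem finrank_schurModule_inf_isometryInvariants_of_isAlt [CharZero K]
    (hm : Module.finrank K W = 2 * m) (alt : C.IsAlt) (hC : C.SeparatingLeft)
    (hmu : Antitone mu) :
    Module.finrank K ↥(schurModule K W mu S ⊓ isometryInvariants C (∑ i, mu i))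
      = if ∀ j : ℕ, Even (Finset.univ.filter fun i => j < mu i).card then 1 else 0 := by
  have compatible : (symplecticPattern K m).IsCompatible C :=
    ⟨fun v w => by rw [← alt.neg v w]; exact (neg_one_mul _).symm, hC⟩
  obtain ⟨e, he⟩ := compatible.exists_isStandard (by rw [Fintype.card_fin, hm])
  rw [finrank_schurModule_inf_isometryInvariants compatible hm hmu he]
  refine if_congr ⟨fun ⟨x, hx, x_ne⟩ => ?_, fun even => ?_⟩ rfl rfl
  · exact (forall_pairIndex_eq_iff_forall_even_card hmu).1 <|
      pairIndex_eq_of_forall_prod_pow_eq_one fun s hs =>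
        prod_pow_eq_one_of_contract_ne_zero hm he hx.2 x_ne hs
  · have pair_eq := (forall_pairIndex_eq_iff_forall_even_card hmu).2 even
    exact exists_invariant_of_isMatching compatible he
      (isMatching_colMatching fun a b => by cases b; exacts [rfl, pair_eq a])

end Symplectic

theorem stmt10_general {K : Type*} [Field K] [CharZero K]
    (V W : Type*) [AddCommGroup V] [Module K V] [FiniteDimensional K V]
    [AddCommGroup W] [Module K W] [FiniteDimensional K W]
    {n m : ℕ} (hnV : Module.finrank K V = n) (hnW : Module.finrank K W = 2 * m)
    (B : V →ₗ[K] V →ₗ[K] K) (hBsymm : ∀ v w, B v w = B w v)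
    (hBnd : ∀ v, (∀ w, B v w = 0) → v = 0)
    (C : W →ₗ[K] W →ₗ[K] K) (hCalt : ∀ w, C w w = 0)
    (hCnd : ∀ v, (∀ w, C v w = 0) → v = 0)
    (lam : Fin n → ℕ) (hlam : Antitone lam)
    (mu : Fin (2 * m) → ℕ) (hmu : Antitone mu)
    (T : (Σ i : Fin n, Fin (lam i)) ≃ Fin (∑ i, lam i))
    (S : (Σ i : Fin (2 * m), Fin (mu i)) ≃ Fin (∑ i, mu i)) :
    ((∀ c : K, IsSquare c) →
      Module.finrank K ↥(schurModule K V lam T ⊓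
          ⨅ (g : V →ₗ[K] V) (_ : ∀ v w, B (g v) (g w) = B v w),
            LinearMap.eqLocus (diagAction K V (∑ i, lam i) g) LinearMap.id)
        = if ∀ i, Even (lam i) then 1 else 0) ∧
    Module.finrank K ↥(schurModule K W mu S ⊓
        ⨅ (g : W →ₗ[K] W) (_ : ∀ v w, C (g v) (g w) = C v w),
          LinearMap.eqLocus (diagAction K W (∑ i, mu i) g) LinearMap.id)
      = (if ∀ j : ℕ, Even ((Finset.univ.filter (fun i : Fin (2 * m) => j < mu i)).card)
          then 1 else 0) :=
  ⟨fun hK => finrank_schurModule_inf_isometryInvariants_of_symm hK hnV hBsymm hBnd hlam,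
    finrank_schurModule_inf_isometryInvariants_of_isAlt hnW hCalt hCnd hmu⟩

/-- Let V be an orthogonal space of dimension n (B a nondegenerate symmetric
bilinear form) and W a symplectic space of dimension 2m (C a nondegenerate alternating
form), over an algebraically closed field of characteristic 0.  Then the space of
O(V)-invariants in S_lam V is 1-dimensional if lam = 2μ (all parts even) and 0 otherwise;
and the space of Sp(W)-invariants in S_mu W is 1-dimensional if mu has even columns and 0
otherwise. -/
theorem stmt10 {K : Type*} [Field K] [IsAlgClosed K] [CharZero K]
    (V W : Type*) [AddCommGroup V] [Module K V] [FiniteDimensional K V]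
    [AddCommGroup W] [Module K W] [FiniteDimensional K W]
    {n m : ℕ} (hnV : Module.finrank K V = n) (hnW : Module.finrank K W = 2 * m)
    (B : V →ₗ[K] V →ₗ[K] K) (hBsymm : ∀ v w, B v w = B w v)
    (hBnd : ∀ v, (∀ w, B v w = 0) → v = 0)
    (C : W →ₗ[K] W →ₗ[K] K) (hCalt : ∀ w, C w w = 0)
    (hCnd : ∀ v, (∀ w, C v w = 0) → v = 0)
    (lam : Fin n → ℕ) (hlam : Antitone lam)
    (mu : Fin (2 * m) → ℕ) (hmu : Antitone mu)
    (T : (Σ i : Fin n, Fin (lam i)) ≃ Fin (∑ i, lam i))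
    (S : (Σ i : Fin (2 * m), Fin (mu i)) ≃ Fin (∑ i, mu i)) :
    Module.finrank K ↥(schurModule K V lam T ⊓
        ⨅ (g : V →ₗ[K] V) (_ : ∀ v w, B (g v) (g w) = B v w),
          LinearMap.eqLocus (diagAction K V (∑ i, lam i) g) LinearMap.id)
      = (if ∀ i, Even (lam i) then 1 else 0) ∧
    Module.finrank K ↥(schurModule K W mu S ⊓
        ⨅ (g : W →ₗ[K] W) (_ : ∀ v w, C (g v) (g w) = C v w),
          LinearMap.eqLocus (diagAction K W (∑ i, mu i) g) LinearMap.id)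
      = (if ∀ j : ℕ, Even ((Finset.univ.filter (fun i : Fin (2 * m) => j < mu i)).card)
          then 1 else 0) := by
  obtain ⟨orthogonal, symplectic⟩ := stmt10_general V W hnV hnW B hBsymm hBnd C hCalt hCnd
    lam hlam mu hmu T S
  exact ⟨orthogonal IsAlgClosed.exists_eq_mul_self, symplectic⟩
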